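/- For every z with 0 ≤ z ≤ 1/2 and every y > 0, it is not the case that both j_z'(y) = 0 and j_z''(y) = 0. (That is, j_z has no stationary points of inflection for z ≤ 1/2.) -/

import Mathlib

/-!
Write `D = y² - 2yz + 1`, `x = X z y` and `s = x / y`. Since `dx/dy = y² / D`, one has
`D y s' = y² - s D`. In terms of `s`,
`j_z(y) = D ((-6zy³ + (8 + 16z²)y² - 30zy + 12) s³ + 2(zy - 1)y² s²) / y⁶`,
so `j_z'(y) = s G(s, y, z) / y⁷` where `G` is quadratic in `s`, and along the curve
`d/dy G = H / (D y)` where `H` is again quadratic in `s`. As `s > 0`, a stationary point of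
inflection makes the two quadratics `G` and `H` vanish at the same `s`, hence their resultant with
respect to `s` vanishes. Nothing about `X` beyond its derivative and its positivity is needed: for
`0 ≤ z ≤ 1/2` and `y > 0` the resultant has no zero.

The resultant is `-256 y¹⁰ resPoly y z`. With `c = zy` and `T = y² - 4c²`, which is nonnegative
exactly because `z ≤ 1/2`, the polynomial `y² resPoly y z` becomes
`c² q0(c) + ∑_{k=1}^{6} T^k q_k(c)` (`resPoly_expansion`), and each univariate `q_k` is positive on
all of `ℝ` by an explicit sum of squares in a shifted variable `u`.
-/

open Real Topology Filter MeasureTheory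

/-- The tortoise coordinate `X z y = ∫_0^y t²/(t² - 2tz + 1) dt`. -/
noncomputable def X (z y : ℝ) : ℝ := ∫ t in (0:ℝ)..y, t ^ 2 / (t ^ 2 - 2 * t * z + 1)

/-- The function `w(x,y,z)`. -/
noncomputable def w (x y z : ℝ) : ℝ :=
  (-6 * z / y ^ 4 + (8 + 28 * z ^ 2) / y ^ 5 - (52 * z + 32 * z ^ 3) / y ^ 6
      + (20 + 76 * z ^ 2) / y ^ 7 - 54 * z / y ^ 8 + 12 / y ^ 9) * x ^ 3
    + (2 * z / y ^ 3 - (2 + 4 * z ^ 2) / y ^ 4 + 6 * z / y ^ 5 - 2 / y ^ 6) * x ^ 2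

/-- The function `j_z(y) = w(X_z(y), y, z)`. -/
noncomputable def j (z y : ℝ) : ℝ := w (X z y) y z

namespace NoInflection

/-! ### The two quadratics and their resultant -/

/-- Coefficient of `s ^ 2` in `G`. -/
noncomputable def g2 (y z : ℝ) : ℝ :=
  24 * z * y ^ 5 + (-140 * z ^ 2 - 40) * y ^ 4 + (192 * z ^ 3 + 312 * z) * y ^ 3
    + (-532 * z ^ 2 - 140) * y ^ 2 + 432 * z * y - 108

/-- Coefficient of `s ^ 1` in `G`. -/
noncomputable def g1 (y z : ℝ) : ℝ :=
  -24 * z * y ^ 5 + (64 * z ^ 2 + 32) * y ^ 4 - 120 * z * y ^ 3 + 48 * y ^ 2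

/-- Coefficient of `s ^ 0` in `G`. -/
noncomputable def g0 (y z : ℝ) : ℝ :=
  4 * z * y ^ 5 - 4 * y ^ 4

/-- The quadratic in `s = X z y / y` for which `j_z'(y) = s * G s y z / y ^ 7`. -/
noncomputable def G (s y z : ℝ) : ℝ := g2 y z * s ^ 2 + g1 y z * s + g0 y z

/-- Coefficient of `s ^ 2` in `H`. -/
noncomputable def h2 (y z : ℝ) : ℝ :=
  72 * z * y ^ 7 + (-424 * z ^ 2 - 80) * y ^ 6 + (752 * z ^ 3 + 544 * z) * y ^ 5
    + (-384 * z ^ 4 - 904 * z ^ 2 - 80) * y ^ 4 + (192 * z ^ 3 - 120 * z) * y ^ 3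
    + (864 * z ^ 2 + 216) * y ^ 2 - 864 * z * y + 216

/-- Coefficient of `s ^ 1` in `H`. -/
noncomputable def h1 (y z : ℝ) : ℝ :=
  -48 * z * y ^ 7 + (104 * z ^ 2 + 16) * y ^ 6 + 96 * z * y ^ 5 + (-392 * z ^ 2 - 136) * y ^ 4
    + 528 * z * y ^ 3 - 168 * y ^ 2

/-- Coefficient of `s ^ 0` in `H`. -/
noncomputable def h0 (y z : ℝ) : ℝ :=
  -4 * z * y ^ 7 + (24 * z ^ 2 + 16) * y ^ 6 - 68 * z * y ^ 5 + 32 * y ^ 4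

/-- The quadratic in `s = X z y / y` for which
`d/dy G (X z y / y) y z = H s y z / (y * (y ^ 2 - 2 * y * z + 1))`. -/
noncomputable def H (s y z : ℝ) : ℝ := h2 y z * s ^ 2 + h1 y z * s + h0 y z

/-- Up to the factor `-256 * y ^ 10`, the resultant of `G` and `H` with respect to `s`. -/
noncomputable def resPoly (y z : ℝ) : ℝ :=
  72 * z ^ 4 * y ^ 14 + (-576 * z ^ 5 - 432 * z ^ 3) * y ^ 13
    + (1947 * z ^ 6 + 3552 * z ^ 4 + 1152 * z ^ 2) * y ^ 12
    + (-3504 * z ^ 7 - 11988 * z ^ 5 - 10464 * z ^ 3 - 1440 * z) * y ^ 11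
    + (3452 * z ^ 8 + 20360 * z ^ 6 + 38762 * z ^ 4 + 15384 * z ^ 2 + 720) * y ^ 10
    + (-1536 * z ^ 9 - 16456 * z ^ 7 - 71800 * z ^ 5 - 66316 * z ^ 3 - 10536 * z) * y ^ 9
    + (2040 * z ^ 8 + 62966 * z ^ 6 + 143492 * z ^ 4 + 57803 * z ^ 2 + 2160) * y ^ 8
    + (4608 * z ^ 9 - 8608 * z ^ 7 - 153832 * z ^ 5 - 154672 * z ^ 3 - 21648 * z) * y ^ 7
    + (-20100 * z ^ 8 + 48272 * z ^ 6 + 208760 * z ^ 4 + 83120 * z ^ 2 + 2760) * y ^ 6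
    + (36120 * z ^ 7 - 104440 * z ^ 5 - 151552 * z ^ 3 - 20824 * z) * y ^ 5
    + (-33769 * z ^ 6 + 109100 * z ^ 4 + 58958 * z ^ 2 + 1908) * y ^ 4
    + (17900 * z ^ 5 - 62848 * z ^ 3 - 11680 * z) * y ^ 3
    + (-5530 * z ^ 4 + 20912 * z ^ 2 + 944) * y ^ 2 + (972 * z ^ 3 - 3888 * z) * y
    + (-81 * z ^ 2 + 324)

/-- The `T`-free term, divided by `c ^ 2`, of `resPoly_expansion`. -/
noncomputable def q0 (c : ℝ) : ℝ :=
  294912 * c ^ 14 - 2359296 * c ^ 13 + 8854272 * c ^ 12 - 19906560 * c ^ 11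
    + 29983680 * c ^ 10 - 32630400 * c ^ 9 + 27208512 * c ^ 8 - 17932032 * c ^ 7
    + 9539388 * c ^ 6 - 4139208 * c ^ 5 + 1468071 * c ^ 4 - 420372 * c ^ 3 + 93222 * c ^ 2
    - 14580 * c + 1215

/-- Coefficient of `T ^ 1` in `resPoly_expansion`. -/
noncomputable def q1 (c : ℝ) : ℝ :=
  442368 * c ^ 14 - 3391488 * c ^ 13 + 12122880 * c ^ 12 - 25478400 * c ^ 11
    + 35043168 * c ^ 10 - 34042560 * c ^ 9 + 24955752 * c ^ 8 - 14205408 * c ^ 7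
    + 6414672 * c ^ 6 - 2316408 * c ^ 5 + 672348 * c ^ 4 - 156288 * c ^ 3 + 28464 * c ^ 2
    - 3888 * c + 324

/-- Coefficient of `T ^ 2` in `resPoly_expansion`. -/
noncomputable def q2 (c : ℝ) : ℝ :=
  276480 * c ^ 12 - 2027520 * c ^ 11 + 6883872 * c ^ 10 - 13419456 * c ^ 9 + 16579484 * c ^ 8
    - 13987432 * c ^ 7 + 8716358 * c ^ 6 - 4088104 * c ^ 5 + 1471160 * c ^ 4 - 401440 * c ^ 3
    + 81854 * c ^ 2 - 11680 * c + 944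

/-- Coefficient of `T ^ 3` in `resPoly_expansion`. -/
noncomputable def q3 (c : ℝ) : ℝ :=
  92160 * c ^ 10 - 645120 * c ^ 9 + 2074032 * c ^ 8 - 3712752 * c ^ 7 + 4023592 * c ^ 6
    - 2818616 * c ^ 5 + 1413940 * c ^ 4 - 501040 * c ^ 3 + 127280 * c ^ 2 - 20824 * c + 1908

/-- Coefficient of `T ^ 4` in `resPoly_expansion`. -/
noncomputable def q4 (c : ℝ) : ℝ :=
  17280 * c ^ 8 - 115200 * c ^ 7 + 349467 * c ^ 6 - 566868 * c ^ 5 + 519242 * c ^ 4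
    - 277036 * c ^ 3 + 101003 * c ^ 2 - 21648 * c + 2760

/-- Coefficient of `T ^ 5` in `resPoly_expansion`. -/
noncomputable def q5 (c : ℝ) : ℝ :=
  1728 * c ^ 6 - 10944 * c ^ 5 + 31200 * c ^ 4 - 45024 * c ^ 3 + 32664 * c ^ 2 - 10536 * c
    + 2160

/-- Coefficient of `T ^ 6` in `resPoly_expansion`. -/
noncomputable def q6 (c : ℝ) : ℝ :=
  72 * c ^ 4 - 432 * c ^ 3 + 1152 * c ^ 2 - 1440 * c + 720

theorem resPoly_expansion (y z c T : ℝ) (hc : c = z * y) (hT : T = y ^ 2 - 4 * c ^ 2) :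
    y ^ 2 * resPoly y z = c ^ 2 * q0 c + T * q1 c + T ^ 2 * q2 c + T ^ 3 * q3 c + T ^ 4 * q4 c
      + T ^ 5 * q5 c + T ^ 6 * q6 c := by
  subst hT hc
  unfold resPoly q0 q1 q2 q3 q4 q5 q6
  ring

/-! ### Positivity of the resultant -/

/-- The squares in `q0_pos`, …, `q6_pos` come from rounding the real and imaginary parts of the
product of `u - r` over the complex roots `r` in the upper half-plane of a slightly smaller
polynomial; the even-power terms absorb the rounding error. -/
theorem q0_pos (c : ℝ) : 0 < q0 c := by
  obtain ⟨u, rfl⟩ : ∃ u, c = (u + 1) / 3 := ⟨3 * c - 1, by ring⟩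
  have h : q0 ((u + 1) / 3) =
      (2 * (172 * u ^ 7 - 954 * u ^ 6 - 6036 * u ^ 5 + 22710 * u ^ 4 + 18781 * u ^ 3 - 36232 * u ^ 2
        - 3331 * u + 2713) ^ 2
      + 2 * (-1617 * u ^ 6 + 6865 * u ^ 5 + 12990 * u ^ 4 - 39662 * u ^ 3 - 15147 * u ^ 2 + 16083 * u
        - 1530) ^ 2
      + (2145164 + 12474 * (u + 1) ^ 2 + 26424922 * u ^ 2 + 53168 * u ^ 2 * (u - 1) ^ 2
        + 49782472 * u ^ 4 + 48280 * u ^ 4 * (u + 1) ^ 2 + 32833862 * u ^ 6 + 25964 * u ^ 6 * (u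
        - 1) ^ 2 + 6577140 * u ^ 8 + 3964 * u ^ 8 * (u + 1) ^ 2 + 1021884 * u ^ 10
        + 10078 * u ^ 10 * (u - 1) ^ 2 + 317672 * u ^ 12 + 496 * u ^ 12 * (u + 1) ^ 2
        + 5872 * u ^ 14))
      / 1062882 := by
    unfold q0; ring
  rw [h]; positivity

theorem q1_pos (c : ℝ) : 0 < q1 c := by
  obtain ⟨u, rfl⟩ : ∃ u, c = (u + 1) / 3 := ⟨3 * c - 1, by ring⟩
  have h : q1 ((u + 1) / 3) =
      (2 * (57 * u ^ 7 - 322 * u ^ 6 - 1481 * u ^ 5 + 5808 * u ^ 4 + 7154 * u ^ 3 - 6188 * u ^ 2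
        - 4703 * u + 322) ^ 2
      + 2 * (-439 * u ^ 6 + 1963 * u ^ 5 + 3517 * u ^ 4 - 8775 * u ^ 3 - 8709 * u ^ 2 + 1872 * u
        + 747) ^ 2
      + (328520 + 2710 * (u + 1) ^ 2 + 4310910 * u ^ 2 + 298 * u ^ 2 * (u + 1) ^ 2
        + 11479484 * u ^ 4 + 12146 * u ^ 4 * (u - 1) ^ 2 + 7688588 * u ^ 6 + 9180 * u ^ 6 * (u
        - 1) ^ 2 + 746826 * u ^ 8 + 2016 * u ^ 8 * (u - 1) ^ 2 + 24778 * u ^ 10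
        + 3638 * u ^ 10 * (u + 1) ^ 2 + 57608 * u ^ 12 + 156 * u ^ 12 * (u - 1) ^ 2
        + 1538 * u ^ 14))
      / (177147/2) := by
    unfold q1; ring
  rw [h]; positivity

theorem q2_pos (c : ℝ) : 0 < q2 c := by
  obtain ⟨u, rfl⟩ : ∃ u, c = (u + 1) / 3 := ⟨3 * c - 1, by ring⟩
  have h : q2 ((u + 1) / 3) =
      (2 * (66 * u ^ 6 - 388 * u ^ 5 - 1178 * u ^ 4 + 5355 * u ^ 3 + 3968 * u ^ 2 - 3087 * u - 959) ^ 2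
      + 2 * (-463 * u ^ 5 + 2081 * u ^ 4 + 2201 * u ^ 3 - 6442 * u ^ 2 - 3547 * u + 390) ^ 2
      + (373440 + 5022 * (u - 1) ^ 2 + 3313132 * u ^ 2 + 3618 * u ^ 2 * (u + 1) ^ 2
        + 4424684 * u ^ 4 + 376 * u ^ 4 * (u + 1) ^ 2 + 1000160 * u ^ 6 + 1386 * u ^ 6 * (u
        - 1) ^ 2 + 20202 * u ^ 8 + 610 * u ^ 8 * (u + 1) ^ 2 + 72924 * u ^ 10 + 16 * u ^ 10 * (u
        + 1) ^ 2 + 1512 * u ^ 12))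
      / 19683 := by
    unfold q2; ring
  rw [h]; positivity

theorem q3_pos (c : ℝ) : 0 < q3 c := by
  obtain ⟨u, rfl⟩ : ∃ u, c = (u + 1) / 3 := ⟨3 * c - 1, by ring⟩
  have h : q3 ((u + 1) / 3) =
      (2 * (48 * u ^ 5 - 293 * u ^ 4 - 612 * u ^ 3 + 2893 * u ^ 2 + 1349 * u - 575) ^ 2
      + 2 * (-328 * u ^ 4 + 1374 * u ^ 3 + 922 * u ^ 2 - 2410 * u - 656) ^ 2
      + (168188 + 146 * (u + 1) ^ 2 + 691218 * u ^ 2 + 1702 * u ^ 2 * (u + 1) ^ 2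
        + 369070 * u ^ 4 + 3072 * u ^ 4 * (u - 1) ^ 2 + 15252 * u ^ 6 + 324 * u ^ 6 * (u
        + 1) ^ 2 + 30018 * u ^ 8 + 32 * u ^ 8 * (u - 1) ^ 2 + 480 * u ^ 10))
      / (6561/2) := by
    unfold q3; ring
  rw [h]; positivity

theorem q4_pos (c : ℝ) : 0 < q4 c := by
  obtain ⟨u, rfl⟩ : ∃ u, c = (u + 1) / 2 := ⟨2 * c - 1, by ring⟩
  have h : q4 ((u + 1) / 2) =
      (2 * (59 * u ^ 4 - 196 * u ^ 3 - 356 * u ^ 2 + 449 * u + 313) ^ 2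
      + 2 * (-239 * u ^ 3 + 412 * u ^ 2 + 486 * u - 24) ^ 2
      + (48972 + 104 * (u + 1) ^ 2 + 99492 * u ^ 2 + 68 * u ^ 2 * (u - 1) ^ 2 + 22910 * u ^ 4
        + 212 * u ^ 4 * (u - 1) ^ 2 + 27096 * u ^ 6 + 88 * u ^ 6 * (u + 1) ^ 2 + 1590 * u ^ 8))
      / 128 := by
    unfold q4; ring
  rw [h]; positivity

theorem q5_pos (c : ℝ) : 0 < q5 c := by
  obtain ⟨u, rfl⟩ : ∃ u, c = (u + 1) := ⟨c - 1, by ring⟩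
  have h : q5 ((u + 1)) =
      (2 * (8 * u ^ 3 - 2 * u ^ 2 - 14 * u - 3) ^ 2
      + 2 * (-17 * u ^ 2 - 6 * u + 6) ^ 2
      + (9 + 5 * (u - 1) ^ 2 + 13 * u ^ 2 + 8 * u ^ 2 * (u - 1) ^ 2 + 46 * u ^ 4 + 8 * u ^ 4 * (u
        + 1) ^ 2 + 8 * u ^ 6))
      / (1/12) := by
    unfold q5; ring
  rw [h]; positivity

theorem q6_pos (c : ℝ) : 0 < q6 c := by
  obtain ⟨u, rfl⟩ : ∃ u, c = (u + 2) / 2 := ⟨2 * c - 2, by ring⟩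
  have h : q6 ((u + 2) / 2) =
      (2 * (u ^ 2 - 2 * u) ^ 2
      + 2 * (-2 * u + 3) ^ 2
      + (10 + 4 * (u - 1) ^ 2 + 12 * u ^ 2))
      / (4/9) := by
    unfold q6; ring
  rw [h]; positivity

theorem resPoly_pos (y z : ℝ) (hz0 : 0 ≤ z) (hz1 : z ≤ 1 / 2) (hy : 0 < y) :
    0 < resPoly y z := by
  have hexp := resPoly_expansion y z (z * y) (y ^ 2 - 4 * (z * y) ^ 2) rfl rfl
  have hT : 0 ≤ y ^ 2 - 4 * (z * y) ^ 2 := by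
    have h : y ^ 2 - 4 * (z * y) ^ 2 = y ^ 2 * ((1 - 2 * z) * (1 + 2 * z)) := by ring
    rw [h]
    have h1 : 0 ≤ 1 - 2 * z := by linarith
    positivity
  have h0 := q0_pos (z * y)
  have h1 := q1_pos (z * y)
  have h2 := q2_pos (z * y)
  have h3 := q3_pos (z * y)
  have h4 := q4_pos (z * y)
  have h5 := q5_pos (z * y)
  have h6 := q6_pos (z * y)
  have hpos : 0 < y ^ 2 * resPoly y z := by
    rw [hexp]
    -- The terms `c² q0(c)` and `T q1(c)` never vanish together: `c = 0` forces `T = y² > 0`.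
    rcases hz0.eq_or_lt with hz | hz
    · subst hz
      have hT' : 0 < y ^ 2 - 4 * (0 * y) ^ 2 := by
        have : y ^ 2 - 4 * (0 * y) ^ 2 = y ^ 2 := by ring
        rw [this]; positivity
      positivity
    · positivity
  exact pos_of_mul_pos_right hpos (by positivity)

/-- `G` and `H` have no common root `s ≠ 0`, because their resultant is negative. -/
theorem not_common_root (s y z : ℝ) (hz0 : 0 ≤ z) (hz1 : z ≤ 1 / 2) (hy : 0 < y) (hs : s ≠ 0)
    (hG : G s y z = 0) (hH : H s y z = 0) : False := by
  have hR := resPoly_pos y z hz0 hz1 hy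
  have hres : (g2 y z * h0 y z - g0 y z * h2 y z) ^ 2
      - (g2 y z * h1 y z - g1 y z * h2 y z) * (g1 y z * h0 y z - g0 y z * h1 y z)
      = -256 * y ^ 10 * resPoly y z := by
    unfold g0 g1 g2 h0 h1 h2 resPoly
    ring
  unfold G at hG
  unfold H at hH
  -- Eliminating `s ^ 2`, respectively the constant term, leaves two linear equations in `s`.
  have e1 : (g2 y z * h1 y z - g1 y z * h2 y z) * s + (g2 y z * h0 y z - g0 y z * h2 y z) = 0 := by
    linear_combination g2 y z * hH - h2 y z * hG
  have e2 : (g2 y z * h0 y z - g0 y z * h2 y z) * s + (g1 y z * h0 y z - g0 y z * h1 y z) = 0 := by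
    apply mul_left_cancel₀ hs
    linear_combination h0 y z * hG - g0 y z * hH
  have hzero : (g2 y z * h0 y z - g0 y z * h2 y z) ^ 2
      - (g2 y z * h1 y z - g1 y z * h2 y z) * (g1 y z * h0 y z - g0 y z * h1 y z) = 0 := by
    linear_combination (g2 y z * h0 y z - g0 y z * h2 y z) * e1
      - (g2 y z * h1 y z - g1 y z * h2 y z) * e2
  have hpos : 0 < 256 * y ^ 10 * resPoly y z := by positivity
  linarith

/-! ### Derivatives of the tortoise coordinate and of `j` -/

theorem D_pos (z t : ℝ) (hz0 : 0 ≤ z) (hz1 : z ≤ 1 / 2) : 0 < t ^ 2 - 2 * t * z + 1 := by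
  nlinarith [sq_nonneg (t - z)]

theorem integrand_continuous (z : ℝ) (hz0 : 0 ≤ z) (hz1 : z ≤ 1 / 2) :
    Continuous fun t : ℝ => t ^ 2 / (t ^ 2 - 2 * t * z + 1) :=
  Continuous.div (by fun_prop) (by fun_prop) fun t => (D_pos z t hz0 hz1).ne'

theorem hasDerivAt_X (z y : ℝ) (hz0 : 0 ≤ z) (hz1 : z ≤ 1 / 2) :
    HasDerivAt (X z) (y ^ 2 / (y ^ 2 - 2 * y * z + 1)) y :=
  (integrand_continuous z hz0 hz1).integral_hasStrictDerivAt 0 y |>.hasDerivAt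

theorem X_pos (z y : ℝ) (hz0 : 0 ≤ z) (hz1 : z ≤ 1 / 2) (hy : 0 < y) : 0 < X z y := by
  unfold X
  refine intervalIntegral.intervalIntegral_pos_of_pos_on
    ((integrand_continuous z hz0 hz1).intervalIntegrable _ _) (fun t ht => ?_) hy
  have := D_pos z t hz0 hz1
  have := ht.1
  positivity

/-- The ratio `s = X z y / y`, in which the derivatives of `j` have polynomial numerators. -/
noncomputable def S (z y : ℝ) : ℝ := X z y / y

theorem hasDerivAt_S (z y : ℝ) (hz0 : 0 ≤ z) (hz1 : z ≤ 1 / 2) (hy : 0 < y) :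
    HasDerivAt (S z) ((y ^ 2 / (y ^ 2 - 2 * y * z + 1) - S z y) / y) y := by
  have h := (hasDerivAt_X z y hz0 hz1).div (hasDerivAt_id y) hy.ne'
  refine h.congr_deriv ?_
  have := D_pos z y hz0 hz1
  simp only [S, id]
  field_simp

/-- Both coefficients of `w` are divisible by `y ^ 2 - 2 * y * z + 1`, which cancels the denominator
of `dX/dy` in the derivative of `j`. -/
theorem j_eq (z y : ℝ) (hy : 0 < y) :
    j z y = (y ^ 2 - 2 * y * z + 1) * ((-6 * z * y ^ 3 + (8 + 16 * z ^ 2) * y ^ 2 - 30 * z * y + 12)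
      * S z y ^ 3 + (2 * z * y ^ 3 - 2 * y ^ 2) * S z y ^ 2) / y ^ 6 := by
  unfold j w S
  field_simp
  ring

theorem hasDerivAt_quintic (a5 a4 a3 a2 a1 a0 y : ℝ) :
    HasDerivAt (fun t : ℝ => a5 * t ^ 5 + a4 * t ^ 4 + a3 * t ^ 3 + a2 * t ^ 2 + a1 * t + a0)
      (5 * a5 * y ^ 4 + 4 * a4 * y ^ 3 + 3 * a3 * y ^ 2 + 2 * a2 * y + a1) y := by
  refine ((((((hasDerivAt_pow 5 y).const_mul a5).add ((hasDerivAt_pow 4 y).const_mul a4)).add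
    ((hasDerivAt_pow 3 y).const_mul a3)).add ((hasDerivAt_pow 2 y).const_mul a2)).add
    ((hasDerivAt_id y).const_mul a1)).add_const a0 |>.congr_deriv ?_
  push_cast
  ring

theorem hasDerivAt_j (z y : ℝ) (hz0 : 0 ≤ z) (hz1 : z ≤ 1 / 2) (hy : 0 < y) :
    HasDerivAt (j z) (S z y * G (S z y) y z / y ^ 7) y := by
  have hS := hasDerivAt_S z y hz0 hz1 hy
  have hD := D_pos z y hz0 hz1
  have hD' : y * (y - 2 * z) + 1 ≠ 0 := by
    have : y * (y - 2 * z) + 1 = y ^ 2 - 2 * y * z + 1 := by ring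
    rw [this]; exact hD.ne'
  have d1 := hasDerivAt_quintic 0 0 0 1 (-2 * z) 1 y
  have d2 := hasDerivAt_quintic 0 0 (-6 * z) (8 + 16 * z ^ 2) (-30 * z) 12 y
  have d3 := hasDerivAt_quintic 0 0 (2 * z) (-2) 0 0 y
  have d4 := (d1.mul ((d2.mul (hS.pow 3)).add (d3.mul (hS.pow 2)))).div
    (hasDerivAt_pow 6 y) (by positivity)
  refine HasDerivAt.congr_of_eventuallyEq (d4.congr_deriv ?_) ?_
  · simp only [Pi.mul_apply, Pi.add_apply, Pi.pow_apply]
    generalize S z y = s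
    unfold G g0 g1 g2
    field_simp
    push_cast
    ring
  · filter_upwards [lt_mem_nhds hy] with t ht
    rw [j_eq z t ht]
    simp only [Pi.mul_apply, Pi.add_apply, Pi.pow_apply, Pi.div_apply]
    ring

theorem hasDerivAt_G (z y : ℝ) (hz0 : 0 ≤ z) (hz1 : z ≤ 1 / 2) (hy : 0 < y) :
    HasDerivAt (fun t => G (S z t) t z) (H (S z y) y z / (y * (y ^ 2 - 2 * y * z + 1))) y := by
  have hS := hasDerivAt_S z y hz0 hz1 hy
  have hD := D_pos z y hz0 hz1
  -- `field_simp` would factor the denominator, so it is made atomic first.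
  obtain ⟨d, hd⟩ : ∃ d, d = y ^ 2 - 2 * y * z + 1 := ⟨_, rfl⟩
  rw [← hd] at hS hD ⊢
  have k2 := hasDerivAt_quintic (24 * z) (-140 * z ^ 2 - 40) (192 * z ^ 3 + 312 * z)
    (-532 * z ^ 2 - 140) (432 * z) (-108) y
  have k1 := hasDerivAt_quintic (-24 * z) (64 * z ^ 2 + 32) (-120 * z) 48 0 0 y
  have k0 := hasDerivAt_quintic (4 * z) (-4) 0 0 0 0 y
  have k := ((k2.mul (hS.pow 2)).add (k1.mul hS)).add k0
  refine HasDerivAt.congr_of_eventuallyEq (k.congr_deriv ?_) ?_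
  · simp only [Pi.pow_apply]
    generalize S z y = s
    unfold H h0 h1 h2
    field_simp
    rw [hd]
    push_cast
    ring
  · refine Eventually.of_forall fun t => ?_
    simp only [G, g2, g1, g0, Pi.mul_apply, Pi.add_apply, Pi.pow_apply]
    ring

end NoInflection

open NoInflection in
/-- For `0 ≤ z ≤ 1/2`, the function `j_z` has no stationary point of inflection:
there is no `y > 0` with `j_z'(y) = 0` and `j_z''(y) = 0`. -/
theorem stmt_14 (z : ℝ) (hz0 : 0 ≤ z) (hz1 : z ≤ 1 / 2) (y : ℝ) (hy : 0 < y) :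
    ¬(deriv (j z) y = 0 ∧ deriv (deriv (j z)) y = 0) := by
  rintro ⟨h1, h2⟩
  have hs : 0 < S z y := div_pos (X_pos z y hz0 hz1 hy) hy
  have hD := D_pos z y hz0 hz1
  rw [(hasDerivAt_j z y hz0 hz1 hy).deriv] at h1
  have hG : G (S z y) y z = 0 := by
    rcases div_eq_zero_iff.1 h1 with h | h
    · exact (mul_eq_zero.1 h).resolve_left hs.ne'
    · exact absurd h (by positivity)
  have hj : deriv (j z) =ᶠ[𝓝 y] fun t => S z t * G (S z t) t z / t ^ 7 := by
    filter_upwards [lt_mem_nhds hy] with t ht using (hasDerivAt_j z t hz0 hz1 ht).deriv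
  have hd := ((hasDerivAt_S z y hz0 hz1 hy).mul (hasDerivAt_G z y hz0 hz1 hy)).div
    (hasDerivAt_pow 7 y) (by positivity)
  rw [(hd.congr_of_eventuallyEq hj).deriv] at h2
  simp only [Pi.mul_apply, hG, mul_zero, zero_mul, zero_add, sub_zero] at h2
  have hH : H (S z y) y z = 0 := by
    by_contra hne
    have : S z y * (H (S z y) y z / (y * (y ^ 2 - 2 * y * z + 1))) * y ^ 7 / (y ^ 7) ^ 2 ≠ 0 := by
      positivity
    exact this h2
  exact not_common_root _ y z hz0 hz1 hy hs.ne' hG hH
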